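/- For every 0 < ε < 1 there exist η > 0 (sufficiently small in terms of ε) and C > 0 (sufficiently large in terms of η) such that, for p ≥ C log n / n, the binomial random graph G = G_{n,p} asymptotically almost surely satisfies the following: for every subgraph G' of G, every path P' on V, every longest path P = v_1…v_ℓ in G' ∪ P', and every set A ⊆ R^{η log n}_{G',P,v_ℓ} with |A| ≥ εn/100, we have |R_{G',P,v_ℓ}(A)| ≥ p^{-1} δ_{G'}(A) − εn/10. -/

import Mathlib

/-! ### Why the theorem holds

A path obtained from `P` by `t` rotations still contains all but `O(t)` edges of `P`, and the
direction in which it traverses `P` changes only at those exceptional places (`rotSet_spec`).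
Cut `P` into `k = K T` blocks of consecutive vertices, `T = ⌈log n⌉`. For each `a ∈ A`, all but
`O(T)` blocks are traversed by `P_a` entirely forwards or entirely backwards. Since `P` is a
longest path, every `G'`-neighbour `b` of `a` lies on `P_a` (`mem_of_longest`), and its predecessor
`c` on `P_a` is in `W = R(A)` if `cb` is an edge of `P`. Hence, in a forward block, the neighbours
of `a` are vertices whose predecessor on `P` is in `W`; in a backward block, vertices whose
successor on `P` is in `W`; in a broken block there is no restriction (`mem_cand`). The set `S` of
pairs `(a, b)` satisfying these conditions has size at most `|A| (|W| + O(T n / k))`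
(`card_cand_le`), as `b` is determined by its predecessor on `P_a`, and it contains all
`G'`-edges leaving `A`, of which there are at least `|A| δ_{G'}(A)` (`exists_data`).

The set `S` is described by the partition into blocks, the three candidate sets, `A`, and a block
type for each vertex and block, so there are only `exp (O(n k)) = exp (O(K n log n))` such sets
(`card_data_le`). A Chernoff bound and a union bound (`Pr_ge_of_family`) show that for large `C`,
a.a.s. each of them contains at most `p |S| + γ p n²` edges of `G_{n,p}`. Therefore
`|A| δ_{G'}(A) ≤ p |A| (|W| + O(n / K)) + γ p n²`, and dividing by `p |A|` gives the claim.
-/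

open Filter Real

namespace Resilience

variable {V : Type*}

/-- The degree of a vertex, as the cardinality of its neighbourhood. -/
noncomputable def deg (G : SimpleGraph V) (v : V) : ℕ := (G.neighborSet v).ncard

/-- The neighbourhood of a set of vertices: all vertices with a neighbour in `X`. -/
def nbhd (G : SimpleGraph V) (X : Set V) : Set V := {v | ∃ x ∈ X, G.Adj v x}

/-- The minimum degree over a set of vertices. -/
noncomputable def minDeg (G : SimpleGraph V) (X : Set V) : ℕ :=
  sInf ((fun v => deg G v) '' X)

/-- The number of edges of `G` with one endpoint in `X` and the other in `Y`. -/
noncomputable def eBetween (G : SimpleGraph V) (X Y : Set V) : ℕ :=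
  {e ∈ G.edgeSet | ∃ x ∈ X, ∃ y ∈ Y, e = s(x, y)}.ncard

/-- The number of edges of `G` with both endpoints in `A`. -/
noncomputable def eIn (G : SimpleGraph V) (A : Set V) : ℕ :=
  {e ∈ G.edgeSet | ∀ v ∈ e, v ∈ A}.ncard

/-- The graph on `V` whose edges are the consecutive pairs of the list `l`;
this lets us view a path, recorded as a list of distinct vertices, as a graph. -/
def listGraph (l : List V) : SimpleGraph V :=
  SimpleGraph.fromEdgeSet {e | ∃ q ∈ l.zip l.tail, e = s(q.1, q.2)}

/-- `l` is a (nonempty) path on `V` all of whose edges lie in `G`. -/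
def IsPathOn (G : SimpleGraph V) (l : List V) : Prop :=
  l ≠ [] ∧ l.Nodup ∧ l.Chain' G.Adj

/-- `l` is a longest path with all edges in `G`. -/
def IsLongestPathOn (G : SimpleGraph V) (l : List V) : Prop :=
  IsPathOn G l ∧ ∀ l' : List V, IsPathOn G l' → l'.length ≤ l.length

/-- `l'` is obtained from the path `l` (with fixed last endpoint) by a single rotation
within `G`, whose broken edge lies on the original path `P`.  Writing
`l = a :: t₁ ++ c :: b :: t₂`, the pivot is `b`, the new edge is `ab ∈ G`, the broken
edge is `cb` (an edge of `P`), and the rotated path is `(a :: t₁ ++ [c]).reverse ++ b :: t₂`. -/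
def IsRotation (G : SimpleGraph V) (P l l' : List V) : Prop :=
  ∃ (a c b : V) (t₁ t₂ : List V),
    l = a :: t₁ ++ c :: b :: t₂ ∧ G.Adj a b ∧ (listGraph P).Adj c b ∧
    l' = (a :: t₁ ++ [c]).reverse ++ b :: t₂

/-- The set of paths obtainable from `P` by at most `t` successive rotations within `G`
with fixed last endpoint, all broken edges lying on `P`. -/
def rotSet (G : SimpleGraph V) (P : List V) : ℕ → Set (List V)
  | 0 => {P}
  | t + 1 => rotSet G P t ∪ {l' | ∃ l ∈ rotSet G P t, IsRotation G P l l'}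

/-- `R^t_{G,P,u}`: the set of endpoints of paths obtainable from `P` by at most `t`
successive rotations within `G` with fixed last endpoint. -/
def Rset (G : SimpleGraph V) (P : List V) (t : ℕ) : Set V :=
  {x | ∃ l ∈ rotSet G P t, l.head? = some x}

/-- The family `H^ε_{n,p}` of Pósa-type subgraphs: there is an ordering of the vertices
with non-increasing degrees such that `d_H(v_i) ≤ (n-i)p - εnp` for all `i < n/2`
(1-based indexing). -/
def PosaFamily (n : ℕ) (p ε : ℝ) (H : SimpleGraph (Fin n)) : Prop :=
  ∃ v : Fin n → Fin n, Function.Bijective v ∧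
    (∀ i j : Fin n, i ≤ j → deg H (v j) ≤ deg H (v i)) ∧
    ∀ i : Fin n, ((i.1 : ℝ) + 1) < n / 2 →
      (deg H (v i) : ℝ) ≤ ((n : ℝ) - ((i.1 : ℝ) + 1)) * p - ε * n * p

/-- The family `H^{ε,δ}_{n,p}` of (shifted) Chvátal-type subgraphs, where the shift
`δn` is recorded as a natural number `s`: there is an ordering of the vertices with
non-increasing degrees such that for all `i < n/2` (1-based indexing), either
`d_H(v_i) ≤ (n-i)p - εnp` or `d_H(v_{n-i-s}) ≤ ip - εnp`. -/
def ChvatalFamily (n : ℕ) (p ε : ℝ) (s : ℕ) (H : SimpleGraph (Fin n)) : Prop :=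
  ∃ v : Fin n → Fin n, Function.Bijective v ∧
    (∀ i j : Fin n, i ≤ j → deg H (v j) ≤ deg H (v i)) ∧
    ∀ i : Fin n, ((i.1 : ℝ) + 1) < n / 2 →
      ((deg H (v i) : ℝ) ≤ ((n : ℝ) - ((i.1 : ℝ) + 1)) * p - ε * n * p ∨
       (deg H (v ⟨n - (i.1 + 1) - s - 1, by have := i.2; omega⟩) : ℝ) ≤
         ((i.1 : ℝ) + 1) * p - ε * n * p)

/-- The probability weight of a fixed graph `G` in the binomial random graph `G_{n,p}`. -/
noncomputable def weight (n : ℕ) (p : ℝ) (G : SimpleGraph (Fin n)) : ℝ :=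
  p ^ G.edgeSet.ncard * (1 - p) ^ (n.choose 2 - G.edgeSet.ncard)

open Classical in
/-- The probability that the binomial random graph `G_{n,p}` satisfies the property `Q`. -/
noncomputable def Pr (n : ℕ) (p : ℝ) (Q : SimpleGraph (Fin n) → Prop) : ℝ :=
  ∑ G : SimpleGraph (Fin n), if Q G then weight n p G else 0

/-- Property `RE(δ)` for a (connected) graph `G` on `n` vertices: for every path `P`
on the vertex set, either `G ∪ P` has a longer path, or there are at least `δn` vertices
`v`, each with a set `T v` of at least `δn` vertices `w`, such that `G ∪ P` has a path
from `v` to `w` with the same vertex set as `P`. -/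
def RE (n : ℕ) (δ : ℝ) (G : SimpleGraph (Fin n)) : Prop :=
  G.Connected ∧
  ∀ P : List (Fin n), P ≠ [] → P.Nodup →
    (∃ Q : List (Fin n), IsPathOn (G ⊔ listGraph P) Q ∧ P.length < Q.length) ∨
    (∃ S : Set (Fin n), δ * n ≤ S.ncard ∧
      ∃ T : Fin n → Set (Fin n), (∀ v ∈ S, δ * n ≤ (T v).ncard) ∧
        ∀ v ∈ S, ∀ w ∈ T v, ∃ Q : List (Fin n),
          IsPathOn (G ⊔ listGraph P) Q ∧ Q.head? = some v ∧ Q.getLast? = some w ∧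
          Q.toFinset = P.toFinset)

/-- `G₂` complements `G₁` (with respect to parameter `δ` as in `RE(δ)`): for every path
`P` on the vertex set, either `G₁ ∪ P` has a longer path, or there are sets `S`, `T v`
as in the definition of `RE(δ)` together with `v ∈ S` and `w ∈ T v` such that `vw` is an
edge of `G₁ ∪ G₂`. -/
def Complements (n : ℕ) (δ : ℝ) (G₁ G₂ : SimpleGraph (Fin n)) : Prop :=
  ∀ P : List (Fin n), P ≠ [] → P.Nodup →
    (∃ Q : List (Fin n), IsPathOn (G₁ ⊔ listGraph P) Q ∧ P.length < Q.length) ∨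
    (∃ S : Set (Fin n), δ * n ≤ S.ncard ∧
      ∃ T : Fin n → Set (Fin n), (∀ v ∈ S, δ * n ≤ (T v).ncard) ∧
        (∀ v ∈ S, ∀ w ∈ T v, ∃ Q : List (Fin n),
          IsPathOn (G₁ ⊔ listGraph P) Q ∧ Q.head? = some v ∧ Q.getLast? = some w ∧
          Q.toFinset = P.toFinset) ∧
        ∃ v ∈ S, ∃ w ∈ T v, (G₁ ⊔ G₂).Adj v w)



/-! ### Consecutive vertices of a path -/

/-- `Foll l x y` says that `x` is immediately followed by `y` in the list `l`. -/
def Foll (l : List V) (x y : V) : Prop := ∃ s t, l = s ++ x :: y :: t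

lemma foll_iff_getElem {l : List V} {x y : V} :
    Foll l x y ↔ ∃ i, ∃ h : i + 1 < l.length, l[i] = x ∧ l[i + 1] = y := by
  constructor
  · rintro ⟨s, t, rfl⟩
    exact ⟨s.length, by simp, by simp, by simp⟩
  · rintro ⟨i, h, rfl, rfl⟩
    refine ⟨l.take i, l.drop (i + 2), ?_⟩
    rw [← List.drop_eq_getElem_cons, ← List.drop_eq_getElem_cons, List.take_append_drop]

lemma Foll.left_unique {l : List V} (hl : l.Nodup) {x x' y : V}
    (h : Foll l x y) (h' : Foll l x' y) : x = x' := by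
  obtain ⟨i, hi, rfl, rfl⟩ := foll_iff_getElem.1 h
  obtain ⟨j, hj, rfl, h2⟩ := foll_iff_getElem.1 h'
  have := (hl.getElem_inj_iff).1 h2
  grind

lemma Foll.right_unique {l : List V} (hl : l.Nodup) {x y y' : V}
    (h : Foll l x y) (h' : Foll l x y') : y = y' := by
  obtain ⟨i, hi, rfl, rfl⟩ := foll_iff_getElem.1 h
  obtain ⟨j, hj, h2, rfl⟩ := foll_iff_getElem.1 h'
  have := (hl.getElem_inj_iff).1 h2
  grind

lemma Foll.reverse {l : List V} {x y : V} (h : Foll l x y) : Foll l.reverse y x := by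
  obtain ⟨s, t, rfl⟩ := h
  exact ⟨t.reverse, s.reverse, by simp⟩

lemma Foll.append_left {l : List V} {x y : V} (h : Foll l x y) (r : List V) :
    Foll (l ++ r) x y := by
  obtain ⟨s, t, rfl⟩ := h
  exact ⟨s, t ++ r, by simp⟩

lemma Foll.append_right {l : List V} {x y : V} (h : Foll l x y) (r : List V) :
    Foll (r ++ l) x y := by
  obtain ⟨s, t, rfl⟩ := h
  exact ⟨r ++ s, t, by simp⟩

lemma Foll.mem_left {l : List V} {x y : V} (h : Foll l x y) : x ∈ l := by
  obtain ⟨s, t, rfl⟩ := h; simp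

lemma Foll.mem_right {l : List V} {x y : V} (h : Foll l x y) : y ∈ l := by
  obtain ⟨s, t, rfl⟩ := h; simp

/-- A consecutive pair of `s ++ c :: b :: t` lies on one side of the cut between `c` and `b`
unless it is the pair `(c, b)` itself. -/
lemma Foll.split {s t : List V} {c b x y : V} (h : Foll (s ++ c :: b :: t) x y) :
    Foll (s ++ [c]) x y ∨ Foll (b :: t) x y ∨ (x = c ∧ y = b) := by
  obtain ⟨i, hi, h1, h2⟩ := foll_iff_getElem.1 h
  rcases lt_trichotomy i s.length with h3 | h3 | h3
  · left
    refine foll_iff_getElem.2 ⟨i, by simp; omega, ?_, ?_⟩ <;> grind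
  · right; right
    subst h3
    constructor <;> grind
  · right; left
    refine foll_iff_getElem.2 ⟨i - (s.length + 1), by grind, ?_, ?_⟩ <;> grind

lemma Foll.listGraph_adj {l : List V} (hl : l.Nodup) {x y : V} (h : Foll l x y) :
    (listGraph l).Adj x y := by
  obtain ⟨s, t, rfl⟩ := h
  rw [listGraph, SimpleGraph.fromEdgeSet_adj]
  refine ⟨⟨(x, y), ?_, rfl⟩, ?_⟩
  · cases s with
    | nil => simp
    | cons z s =>
      rw [List.mem_iff_getElem]
      refine ⟨s.length + 1, by simp, by simp⟩
  · rintro rfl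
    simp [List.nodup_append] at hl

/-- Every vertex of a list other than the first one has a predecessor. -/
lemma exists_foll_left {l : List V} {b : V} (hb : b ∈ l) (h : l.head? ≠ some b) :
    ∃ c, Foll l c b := by
  obtain ⟨i, hi, rfl⟩ := List.mem_iff_getElem.1 hb
  cases i with
  | zero => exact absurd (by simp [List.head?_eq_getElem?, hi]) h
  | succ i => exact ⟨l[i], foll_iff_getElem.2 ⟨i, hi, rfl, rfl⟩⟩

/-- Every vertex of a list other than the last one has a successor. -/
lemma exists_foll_right {l : List V} {b : V} (hb : b ∈ l) (h : l.getLast? ≠ some b) :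
    ∃ c, Foll l b c := by
  obtain ⟨i, hi, rfl⟩ := List.mem_iff_getElem.1 hb
  by_cases h' : i + 1 < l.length
  · exact ⟨l[i+1], foll_iff_getElem.2 ⟨i, h', rfl, rfl⟩⟩
  · exfalso; apply h
    rw [List.getLast?_eq_getElem?]
    have : l.length - 1 = i := by omega
    simp [this, hi]

/-! ### Few rotations keep most of the path oriented consistently -/

section Rotation

variable [DecidableEq V]

/-- `Oriented P l D o`: outside the exceptional set `D`, which contains both ends of `P`, every
edge `xy` of the path `P` (with `x` before `y`) is still a consecutive pair of `l`, traversed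
forwards if `o x = true` and backwards if `o x = false`, and `o` agrees on its two ends. -/
structure Oriented (P l : List V) (D : Finset V) (o : V → Bool) : Prop where
  head : ∀ x, P.head? = some x → x ∈ D
  last : ∀ x, P.getLast? = some x → x ∈ D
  step : ∀ x y, Foll P x y → x ∉ D →
    o y = o x ∧ (o x = true → Foll l x y) ∧ (o x = false → Foll l y x)

/-- One rotation adds at most the two ends of the broken edge to the exceptional set and flips
the orientation of the reversed initial segment. -/
lemma Oriented.rotate {P s t : List V} {c b : V} {D : Finset V} {o : V → Bool}
    (hn : (s ++ c :: b :: t).Nodup) (h : Oriented P (s ++ c :: b :: t) D o) :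
    Oriented P ((s ++ [c]).reverse ++ b :: t) (insert c (insert b D))
      (fun x => if x ∈ s ++ [c] then !o x else o x) := by
  refine ⟨fun x hx => by simp [h.head x hx], fun x hx => by simp [h.last x hx], ?_⟩
  intro x y hxy hxD
  simp only [Finset.mem_insert, not_or] at hxD
  obtain ⟨hxc, hxb, hxD⟩ := hxD
  obtain ⟨h1, h2, h3⟩ := h.step x y hxy hxD
  have hdisj : ∀ z ∈ b :: t, z ∉ s ++ [c] := by
    intro z hz hz'
    have : ((s ++ [c]) ++ (b :: t)).Nodup := by simpa using hn
    exact (List.nodup_append.1 this).2.2 z hz' z hz rfl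
  cases hox : o x with
  | true =>
    rcases (h2 hox).split with h4 | h4 | h4
    · have hx := h4.mem_left
      have hy := h4.mem_right
      refine ⟨by simp only [hx, hy, h1, hox, if_true], ?_, ?_⟩
      · simp only [hx, if_true]; simp
      · intro _; exact h4.reverse.append_left _
    · have hx := hdisj _ h4.mem_left
      have hy := hdisj _ h4.mem_right
      refine ⟨by simp only [hx, hy, h1, hox, if_false], ?_, ?_⟩
      · intro _; exact h4.append_right _
      · simp only [hx, if_false]; simp
    · exact absurd h4.1 hxc
  | false =>
    rcases (h3 hox).split with h4 | h4 | h4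
    · have hy := h4.mem_left
      have hx := h4.mem_right
      refine ⟨by simp only [hx, hy, h1, hox, if_true], ?_, ?_⟩
      · intro _; exact h4.reverse.append_left _
      · simp only [hx, if_true]; simp
    · have hy := hdisj _ h4.mem_left
      have hx := hdisj _ h4.mem_right
      refine ⟨by simp only [hx, hy, h1, hox, if_false], ?_, ?_⟩
      · simp only [hx, if_false]; simp
      · intro _; exact h4.append_right _
    · exact absurd h4.2 hxb

lemma exists_oriented_self {P : List V} (hP : P ≠ []) :
    ∃ D : Finset V, ∃ o, D.card ≤ 2 ∧ Oriented P P D o := by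
  refine ⟨{P.head hP, P.getLast hP}, fun _ => true, Finset.card_le_two, ?_, ?_, ?_⟩
  · intro x hx
    rw [List.head?_eq_some_head hP] at hx
    simp_all
  · intro x hx
    rw [List.getLast?_eq_some_getLast hP] at hx
    simp_all
  · intro x y h _
    exact ⟨rfl, fun _ => h, by simp⟩

/-- Paths obtained by `t` rotations are paths of the ambient graph `H` on the vertices of `P`,
and follow the orientation of `P` up to at most `2t + 2` exceptional vertices. -/
lemma rotSet_spec {G H : SimpleGraph V} (hGH : G ≤ H) {P : List V} (hP : IsPathOn H P) (t : ℕ) :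
    ∀ l ∈ rotSet G P t, l.Perm P ∧ l.IsChain H.Adj ∧
      ∃ D : Finset V, ∃ o, D.card ≤ 2 * t + 2 ∧ Oriented P l D o := by
  induction t with
  | zero =>
    rintro l rfl
    exact ⟨List.Perm.refl _, hP.2.2, exists_oriented_self hP.1⟩
  | succ t ih =>
    rintro l' (hl | ⟨l, hl, a, c, b, t₁, t₂, rfl, hab, -, rfl⟩)
    · obtain ⟨h1, h2, D, o, h3, h4⟩ := ih l' hl
      exact ⟨h1, h2, D, o, by omega, h4⟩
    · obtain ⟨h1, h2, D, o, h3, h4⟩ := ih _ hl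
      have hn := h1.nodup_iff.2 hP.2.1
      refine ⟨?_, ?_, _, _, ?_, h4.rotate hn⟩
      · refine List.Perm.trans ?_ h1
        have : a :: t₁ ++ c :: b :: t₂ = (a :: t₁ ++ [c]) ++ b :: t₂ := by simp
        rw [this]
        exact (List.reverse_perm _).append_right _
      · have : a :: t₁ ++ c :: b :: t₂ = (a :: t₁ ++ [c]) ++ b :: t₂ := by simp
        rw [this, List.isChain_append] at h2
        rw [List.isChain_append]
        refine ⟨?_, h2.2.1, ?_⟩
        · rw [List.isChain_reverse]
          refine h2.1.imp ?_
          intro x y hxy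
          exact hxy.symm
        · intro x hx y hy
          rw [List.getLast?_reverse] at hx
          simp at hx hy
          subst hx; subst hy
          exact hGH hab
      · have := Finset.card_insert_le c (insert b D)
        have := Finset.card_insert_le b D
        omega

end Rotation

/-! ### Cutting the path into blocks -/

section Blocks

variable [DecidableEq V]

/-- The index of the block of `P` containing `x`, when `P` is cut into blocks of `m`
consecutive vertices. -/
def block (P : List V) (m : ℕ) (x : V) : ℕ := P.idxOf x / m

/-- The indices of the blocks that meet `D`, or whose first vertex follows a vertex of `D`. -/
def broken (P : List V) (m : ℕ) (D : Finset V) : Finset ℕ :=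
  D.image (fun d => P.idxOf d / m) ∪ D.image (fun d => (P.idxOf d + 1) / m)

lemma card_broken_le (P : List V) (m : ℕ) (D : Finset V) :
    (broken P m D).card ≤ 2 * D.card := by
  have h := Finset.card_union_le (D.image (fun d => P.idxOf d / m))
    (D.image (fun d => (P.idxOf d + 1) / m))
  have h1 := Finset.card_image_le (s := D) (f := fun d => P.idxOf d / m)
  have h2 := Finset.card_image_le (s := D) (f := fun d => (P.idxOf d + 1) / m)
  unfold broken
  omega

lemma notMem_of_block_notMem {P : List V} {m : ℕ} {D : Finset V} {x : V}
    (h : block P m x ∉ broken P m D) : x ∉ D := by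
  intro hx
  exact h (Finset.mem_union_left _ (Finset.mem_image_of_mem _ hx))

lemma notMem_of_foll {P : List V} (hP : P.Nodup) {m : ℕ} {D : Finset V} {x b : V}
    (hf : Foll P x b) (h : block P m b ∉ broken P m D) : x ∉ D := by
  intro hx
  apply h
  obtain ⟨i, hi, rfl, rfl⟩ := foll_iff_getElem.1 hf
  refine Finset.mem_union_right _ (Finset.mem_image.2 ⟨_, hx, ?_⟩)
  simp only [block]
  rw [hP.idxOf_getElem, hP.idxOf_getElem]

/-- The orientation is constant on unbroken blocks. -/
lemma Oriented.const_on_block {P l : List V} (hP : P.Nodup) {D : Finset V} {o : V → Bool}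
    (h : Oriented P l D o) {m : ℕ} {x y : V} (hx : x ∈ P) (hy : y ∈ P)
    (hxy : block P m x = block P m y) (hb : block P m x ∉ broken P m D) : o x = o y := by
  have key : ∀ i j (_ : i ≤ j) (hj : j < P.length), i / m = j / m → i / m ∉ broken P m D →
      o (P[i]'(by omega)) = o P[j] := by
    intro i j hij
    induction j, hij using Nat.le_induction with
    | base => intros; rfl
    | succ j hij ih =>
      intro hj h1 h2
      have h3 : i / m = j / m := le_antisymm (Nat.div_le_div_right hij)
        (h1 ▸ Nat.div_le_div_right (Nat.le_succ j))
      rw [ih (by omega) h3 h2]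
      refine (h.step _ _ (foll_iff_getElem.2 ⟨j, hj, rfl, rfl⟩) ?_).1.symm
      apply notMem_of_block_notMem (P := P) (m := m)
      rwa [block, hP.idxOf_getElem, ← h3]
  obtain ⟨i, hi, rfl⟩ := List.mem_iff_getElem.1 hx
  obtain ⟨j, hj, rfl⟩ := List.mem_iff_getElem.1 hy
  simp only [block, hP.idxOf_getElem] at hxy hb
  rcases le_total i j with hij | hij
  · exact key i j hij hj hxy hb
  · exact (key j i hij hi hxy.symm (hxy ▸ hb)).symm

lemma Oriented.pred_of_true {P l : List V} (hP : P.Nodup) {D : Finset V} {o : V → Bool}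
    (h : Oriented P l D o) {m : ℕ} {b : V} (hbP : b ∈ P)
    (hb : block P m b ∉ broken P m D) (ho : o b = true) :
    ∃ x, Foll P x b ∧ Foll l x b := by
  obtain ⟨x, hx⟩ := exists_foll_left hbP (fun hh => notMem_of_block_notMem hb (h.head _ hh))
  obtain ⟨h1, h2, -⟩ := h.step x b hx (notMem_of_foll hP hx hb)
  exact ⟨x, hx, h2 (h1 ▸ ho)⟩

lemma Oriented.pred_of_false {P l : List V} {D : Finset V} {o : V → Bool}
    (h : Oriented P l D o) {m : ℕ} {b : V} (hbP : b ∈ P)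
    (hb : block P m b ∉ broken P m D) (ho : o b = false) :
    ∃ y, Foll P b y ∧ Foll l y b := by
  have hD := notMem_of_block_notMem hb
  obtain ⟨y, hy⟩ := exists_foll_right hbP (fun hh => hD (h.last _ hh))
  exact ⟨y, hy, (h.step b y hy hD).2.2 ho⟩

variable [Fintype V]

open Classical in
/-- The candidate neighbours: in a forward block (index `0`) the vertices whose predecessor on
`P` lies in `W`, in a backward block (index `1`) those whose successor on `P` lies in `W`, and
in a broken block (index `2`) all vertices of `P`. -/
noncomputable def cand (P : List V) (W : Finset V) (i : Fin 3) : Finset V :=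
  if i = 0 then Finset.univ.filter (fun b => ∃ x ∈ W, Foll P x b)
  else if i = 1 then Finset.univ.filter (fun b => ∃ y ∈ W, Foll P b y)
  else Finset.univ.filter (fun b => b ∈ P)

open Classical in
/-- The type of a block: broken (`2`), forward (`0`) or backward (`1`). -/
noncomputable def blockType (P : List V) (m : ℕ) (D : Finset V) (o : V → Bool) (j : ℕ) : Fin 3 :=
  if j ∈ broken P m D then 2
  else if ∃ x ∈ P, block P m x = j ∧ o x = true then 0 else 1

/-- A vertex `b` of the path is a candidate as soon as its predecessor on the rotated path `l`
belongs to `W` whenever that predecessor is adjacent to `b` on `P`. -/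
lemma mem_cand {P l : List V} (hP : P.Nodup) {D : Finset V} {o : V → Bool}
    (h : Oriented P l D o) {m : ℕ} {W : Finset V} {b : V} (hbP : b ∈ P)
    (hW : ∀ c, Foll l c b → (listGraph P).Adj c b → c ∈ W) :
    b ∈ cand P W (blockType P m D o (block P m b)) := by
  by_cases hb : block P m b ∈ broken P m D
  · simp [blockType, hb, cand, hbP]
  cases ho : o b with
  | true =>
    have : ∃ x ∈ P, block P m x = block P m b ∧ o x = true := ⟨b, hbP, rfl, ho⟩
    obtain ⟨x, h1, h2⟩ := h.pred_of_true hP hbP hb ho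
    simp only [blockType, hb, this, cand, if_false, if_true]
    simp only [Finset.mem_filter, Finset.mem_univ, true_and]
    exact ⟨x, hW x h2 (h1.listGraph_adj hP), h1⟩
  | false =>
    have : ¬ ∃ x ∈ P, block P m x = block P m b ∧ o x = true := by
      rintro ⟨x, hx, hxb, hox⟩
      have := h.const_on_block hP hx hbP hxb (hxb ▸ hb)
      simp_all
    obtain ⟨y, h1, h2⟩ := h.pred_of_false hbP hb ho
    simp only [blockType, hb, this, cand, if_false, if_true, one_ne_zero]
    simp only [Finset.mem_filter, Finset.mem_univ, true_and]
    exact ⟨y, hW y h2 (h1.listGraph_adj hP).symm, h1⟩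

/-- There are not many more candidates than elements of `W`: outside the broken blocks, the
predecessor of a candidate on the rotated path `l` lies in `W`. -/
lemma card_cand_le {P l : List V} (hP : P.Nodup) (hl : l.Nodup) {D : Finset V} {o : V → Bool}
    (h : Oriented P l D o) {m : ℕ} (hm : 0 < m) (W : Finset V) :
    (Finset.univ.filter (fun b => b ∈ cand P W (blockType P m D o (block P m b)))).card
      ≤ W.card + 2 * m * D.card := by
  classical
  have hsub : Finset.univ.filter (fun b => b ∈ cand P W (blockType P m D o (block P m b))) ⊆
      Finset.univ.filter (fun b => ∃ c ∈ W, Foll l c b) ∪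
      Finset.univ.filter (fun b => b ∈ P ∧ block P m b ∈ broken P m D) := by
    intro b hb
    simp only [Finset.mem_filter, Finset.mem_univ, true_and, Finset.mem_union] at hb ⊢
    by_cases hbr : block P m b ∈ broken P m D
    · right
      simp only [blockType, hbr, cand, if_true] at hb
      simp at hb
      exact ⟨hb, hbr⟩
    · left
      by_cases hex : ∃ x ∈ P, block P m x = block P m b ∧ o x = true
      · simp only [blockType, hbr, hex, cand, if_true, if_false] at hb
        simp only [Finset.mem_filter, Finset.mem_univ, true_and] at hb
        obtain ⟨x, hxW, hxb⟩ := hb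
        obtain ⟨z, hzP, hzb, hoz⟩ := hex
        have hob := h.const_on_block hP hzP hxb.mem_right hzb (hzb ▸ hbr)
        obtain ⟨x', h1, h2⟩ := h.pred_of_true hP hxb.mem_right hbr (hob ▸ hoz)
        exact ⟨x, hxW, hxb.left_unique hP h1 ▸ h2⟩
      · simp only [blockType, hbr, hex, cand, if_true, if_false, one_ne_zero] at hb
        simp only [Finset.mem_filter, Finset.mem_univ, true_and] at hb
        obtain ⟨y, hyW, hby⟩ := hb
        have hob : o b = false := by
          by_contra hne
          exact hex ⟨b, hby.mem_left, rfl, by simpa using hne⟩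
        obtain ⟨y', h1, h2⟩ := h.pred_of_false hby.mem_left hbr hob
        exact ⟨y, hyW, hby.right_unique hP h1 ▸ h2⟩
  refine (Finset.card_le_card hsub).trans ((Finset.card_union_le _ _).trans ?_)
  refine add_le_add ?_ ?_
  · have hc : ∀ b : V, ∃ c, (∃ c ∈ W, Foll l c b) → c ∈ W ∧ Foll l c b := by
      intro b
      by_cases hb : ∃ c ∈ W, Foll l c b
      · obtain ⟨c, hc⟩ := hb
        exact ⟨c, fun _ => hc⟩
      · exact ⟨b, fun hh => absurd hh hb⟩
    choose f hf using hc
    refine Finset.card_le_card_of_injOn f ?_ ?_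
    · intro b hb
      exact (hf b (by simpa using hb)).1
    · intro b hb b' hb' hbb
      have h1 := (hf b (by simpa using hb)).2
      have h2 := (hf b' (by simpa using hb')).2
      rw [← hbb] at h2
      exact h1.right_unique hl h2
  · have h1 : (Finset.univ.filter (fun b => b ∈ P ∧ block P m b ∈ broken P m D)).card
        ≤ (broken P m D ×ˢ Finset.range m).card := by
      refine Finset.card_le_card_of_injOn (fun b => (P.idxOf b / m, P.idxOf b % m)) ?_ ?_
      · intro b hb
        simp only [Finset.coe_filter, Finset.mem_univ, true_and, Set.mem_ofPred_eq] at hb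
        simp only [Finset.coe_product, Set.mem_prod, Finset.mem_coe, Finset.mem_range]
        exact ⟨hb.2, Nat.mod_lt _ hm⟩
      · intro b hb b' hb' hbb
        simp only [Finset.coe_filter, Finset.mem_univ, true_and, Set.mem_ofPred_eq] at hb hb'
        simp only [Prod.mk.injEq] at hbb
        have : P.idxOf b = P.idxOf b' := by
          rw [← Nat.div_add_mod (P.idxOf b) m, hbb.1, hbb.2, Nat.div_add_mod]
        exact (List.idxOf_inj hb.1).1 this
    rw [Finset.card_product, Finset.card_range] at h1
    have h2 := card_broken_le P m D
    calc _ ≤ _ := h1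
      _ ≤ (2 * D.card) * m := Nat.mul_le_mul_right _ h2
      _ = _ := by ring

end Blocks

/-! ### Edge counts in the random graph -/

section Probability

open Classical

/-- The edges of the complete graph on `Fin n`. -/
noncomputable def allEdges (n : ℕ) : Finset (Sym2 (Fin n)) :=
  Finset.univ.filter (fun e => ¬ e.IsDiag)

lemma card_allEdges (n : ℕ) : (allEdges n).card = n.choose 2 := by
  have h := Sym2.card_subtype_not_diag (α := Fin n)
  rw [Fintype.card_fin, Fintype.card_subtype] at h
  rw [← h, allEdges]

/-- The edges of `G`, as a finset. -/
noncomputable def edges {n : ℕ} (G : SimpleGraph (Fin n)) : Finset (Sym2 (Fin n)) :=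
  Finset.univ.filter (fun e => e ∈ G.edgeSet)

lemma ncard_edgeSet {n : ℕ} (G : SimpleGraph (Fin n)) : G.edgeSet.ncard = (edges G).card := by
  rw [← Set.ncard_coe_finset]
  congr 1
  ext e
  simp [edges]

lemma edges_subset {n : ℕ} (G : SimpleGraph (Fin n)) : edges G ⊆ allEdges n := by
  intro e he
  simp only [edges, allEdges, Finset.mem_filter, Finset.mem_univ, true_and] at he ⊢
  exact G.not_isDiag_of_mem_edgeSet he

/-- The edge indicators of `G_{n,p}` are independent: the generating function of the edge set
factorises. -/
lemma sum_weight_prod (n : ℕ) (p : ℝ) (x : Sym2 (Fin n) → ℝ) :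
    ∑ G : SimpleGraph (Fin n), weight n p G * ∏ e ∈ edges G, x e =
      ∏ e ∈ allEdges n, (p * x e + (1 - p)) := by
  rw [Finset.prod_add]
  refine Finset.sum_bij' (fun G _ => edges G)
    (fun s _ => SimpleGraph.fromEdgeSet (s : Set (Sym2 (Fin n)))) ?_ ?_ ?_ ?_ ?_
  · intro G _
    exact Finset.mem_powerset.2 (edges_subset G)
  · intro s _; exact Finset.mem_univ _
  · intro G _
    have : (edges G : Set (Sym2 (Fin n))) = G.edgeSet := by ext e; simp [edges]
    rw [this, SimpleGraph.fromEdgeSet_edgeSet]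
  · intro s hs
    ext e
    have hs' := Finset.mem_powerset.1 hs
    simp only [edges, Finset.mem_filter, Finset.mem_univ, true_and,
      SimpleGraph.edgeSet_fromEdgeSet]
    constructor
    · intro h; exact h.1
    · intro h
      refine ⟨h, ?_⟩
      have := hs' h
      simp only [allEdges, Finset.mem_filter, Finset.mem_univ, true_and] at this
      exact this
  · intro G _
    rw [Finset.prod_mul_distrib, Finset.prod_const, Finset.prod_const,
      Finset.card_sdiff_of_subset (edges_subset G), card_allEdges, weight, ncard_edgeSet]
    ring

lemma sum_weight (n : ℕ) (p : ℝ) : ∑ G : SimpleGraph (Fin n), weight n p G = 1 := by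
  have := sum_weight_prod n p (fun _ => 1)
  simpa using this

lemma weight_nonneg {n : ℕ} {p : ℝ} (h0 : 0 ≤ p) (h1 : p ≤ 1) (G : SimpleGraph (Fin n)) :
    0 ≤ weight n p G := by
  unfold weight
  have : 0 ≤ 1 - p := by linarith
  positivity

/-- The number of ordered pairs in `S` that are edges of `G`. -/
noncomputable def pairCount {n : ℕ} (G : SimpleGraph (Fin n)) (S : Finset (Fin n × Fin n)) : ℕ :=
  (S.filter (fun q => G.Adj q.1 q.2)).card

/-- The number of ordered pairs in `S` whose underlying unordered pair is `e`. -/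
noncomputable def mult {n : ℕ} (S : Finset (Fin n × Fin n)) (e : Sym2 (Fin n)) : ℕ :=
  (S.filter (fun q => s(q.1, q.2) = e)).card

lemma mult_le_two {n : ℕ} (S : Finset (Fin n × Fin n)) (e : Sym2 (Fin n)) : mult S e ≤ 2 := by
  induction e with
  | _ x y =>
    refine le_trans (Finset.card_le_card (t := {(x, y), (y, x)}) ?_) Finset.card_le_two
    rintro ⟨a, b⟩ h
    simp only [Finset.mem_filter, Sym2.eq_iff] at h
    simp only [Finset.mem_insert, Finset.mem_singleton, Prod.mk.injEq]
    exact h.2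

lemma sum_mult {n : ℕ} (S : Finset (Fin n × Fin n)) (E : Finset (Sym2 (Fin n))) :
    ∑ e ∈ E, mult S e = (S.filter (fun q => s(q.1, q.2) ∈ E)).card := by
  rw [Finset.card_eq_sum_card_fiberwise (f := fun q : Fin n × Fin n => s(q.1, q.2)) (t := E)]
  · refine Finset.sum_congr rfl fun e he => ?_
    unfold mult
    congr 1
    ext q
    simp only [Finset.mem_filter]
    constructor
    · rintro ⟨h1, h2⟩; exact ⟨⟨h1, h2 ▸ he⟩, h2⟩
    · rintro ⟨⟨h1, _⟩, h2⟩; exact ⟨h1, h2⟩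
  · intro q hq
    simp only [Finset.coe_filter, Set.mem_ofPred_eq] at hq
    exact hq.2

lemma pairCount_eq {n : ℕ} (G : SimpleGraph (Fin n)) (S : Finset (Fin n × Fin n)) :
    pairCount G S = ∑ e ∈ edges G, mult S e := by
  rw [sum_mult, pairCount]
  congr 1
  ext q
  simp [edges]

/-- The moment generating function of the number of edges in a set `S` of ordered pairs. An edge
may be counted twice, whence `c ^ 2 ≤ 2 * c` for its multiplicity `c` in place of `c ^ 2 = c`. -/
lemma mgf_le {n : ℕ} {p : ℝ} (h0 : 0 ≤ p) (h1 : p ≤ 1) (S : Finset (Fin n × Fin n))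
    {t : ℝ} (ht : 0 ≤ t) (ht1 : t ≤ 1 / 2) :
    ∑ G : SimpleGraph (Fin n), weight n p G * Real.exp (t * pairCount G S) ≤
      Real.exp (p * (t + 2 * t ^ 2) * S.card) := by
  have e1 : ∀ G : SimpleGraph (Fin n), Real.exp (t * pairCount G S) =
      ∏ e ∈ edges G, Real.exp (t * mult S e) := by
    intro G
    rw [← Real.exp_sum, pairCount_eq]
    push_cast
    rw [Finset.mul_sum]
  simp only [e1]
  rw [sum_weight_prod]
  have e2 : ∀ e ∈ allEdges n, p * Real.exp (t * mult S e) + (1 - p) ≤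
      Real.exp (p * (t + 2 * t ^ 2) * mult S e) := by
    intro e _
    have hc : (mult S e : ℝ) ≤ 2 := by exact_mod_cast mult_le_two S e
    have hc0 : (0 : ℝ) ≤ mult S e := Nat.cast_nonneg _
    set c : ℝ := (mult S e : ℝ)
    have hx0 : 0 ≤ t * c := mul_nonneg ht hc0
    have hx1 : t * c ≤ 1 := by nlinarith
    have h2 := Real.abs_exp_sub_one_sub_id_le (x := t * c) (by rw [abs_of_nonneg hx0]; exact hx1)
    have h3 := (abs_le.1 h2).2
    have h4 : (t * c) ^ 2 ≤ 2 * t ^ 2 * c := by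
      have : 0 ≤ t ^ 2 * (c * (2 - c)) :=
        mul_nonneg (sq_nonneg t) (mul_nonneg hc0 (by linarith))
      nlinarith
    have h5 : Real.exp (t * c) - 1 ≤ (t + 2 * t ^ 2) * c := by nlinarith
    have h6 := Real.add_one_le_exp (p * (t + 2 * t ^ 2) * c)
    have h7 := mul_le_mul_of_nonneg_left h5 h0
    nlinarith
  refine (Finset.prod_le_prod ?_ e2).trans ?_
  · intro e _
    have := Real.exp_pos (t * mult S e)
    have : 0 ≤ 1 - p := by linarith
    positivity
  · rw [← Real.exp_sum, ← Finset.mul_sum]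
    refine Real.exp_le_exp.2 (mul_le_mul_of_nonneg_left ?_ (by positivity))
    have : ∑ e ∈ allEdges n, mult S e ≤ S.card := by
      rw [sum_mult]; exact Finset.card_filter_le _ _
    exact_mod_cast this

/-- Chernoff bound together with a union bound over a finite family of sets `S i` of ordered
pairs. -/
lemma Pr_ge_of_family {n : ℕ} {p γ : ℝ} (h0 : 0 ≤ p) (h1 : p ≤ 1) (hγ : 0 < γ) (hγ1 : γ ≤ 1)
    {I : Type*} [Fintype I] (S : I → Finset (Fin n × Fin n)) (Q : SimpleGraph (Fin n) → Prop)
    (hQ : ∀ G, (∀ i, (pairCount G (S i) : ℝ) ≤ p * (S i).card + γ * p * n ^ 2) → Q G) :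
    1 - Fintype.card I * Real.exp (-(γ ^ 2 * p * n ^ 2 / 8)) ≤ Pr n p Q := by
  have hterm : ∀ i, ∑ G : SimpleGraph (Fin n), weight n p G *
      Real.exp (γ / 4 * (pairCount G (S i) - (p * (S i).card + γ * p * n ^ 2))) ≤
      Real.exp (-(γ ^ 2 * p * n ^ 2 / 8)) := by
    intro i
    have h2 := mgf_le h0 h1 (S i) (t := γ / 4) (by positivity) (by linarith)
    have h3 : ∀ G : SimpleGraph (Fin n), weight n p G *
        Real.exp (γ / 4 * (pairCount G (S i) - (p * (S i).card + γ * p * n ^ 2))) =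
        weight n p G * Real.exp (γ / 4 * pairCount G (S i)) *
          Real.exp (-(γ / 4 * (p * (S i).card + γ * p * n ^ 2))) := by
      intro G
      rw [mul_assoc (weight n p G), ← Real.exp_add]
      congr 2; ring
    simp only [h3]
    rw [← Finset.sum_mul]
    refine (mul_le_mul_of_nonneg_right h2 (Real.exp_pos _).le).trans ?_
    rw [← Real.exp_add, Real.exp_le_exp]
    have hS : ((S i).card : ℝ) ≤ n ^ 2 := by
      have := Finset.card_le_univ (S i)
      simp only [Fintype.card_prod, Fintype.card_fin] at this
      rw [sq]
      exact_mod_cast this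
    have h4 : 0 ≤ p * γ ^ 2 * (n ^ 2 - (S i).card) :=
      mul_nonneg (by positivity) (by linarith)
    nlinarith
  have hsum : ∑ i, ∑ G : SimpleGraph (Fin n), weight n p G *
      Real.exp (γ / 4 * (pairCount G (S i) - (p * (S i).card + γ * p * n ^ 2))) ≤
      Fintype.card I * Real.exp (-(γ ^ 2 * p * n ^ 2 / 8)) := by
    refine (Finset.sum_le_sum fun i _ => hterm i).trans ?_
    simp
  rw [Finset.sum_comm] at hsum
  have hle : ∑ G : SimpleGraph (Fin n), weight n p G ≤ Pr n p Q +
      ∑ G : SimpleGraph (Fin n), ∑ i, weight n p G *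
        Real.exp (γ / 4 * (pairCount G (S i) - (p * (S i).card + γ * p * n ^ 2))) := by
    unfold Pr
    rw [← Finset.sum_add_distrib]
    refine Finset.sum_le_sum fun G _ => ?_
    have hw := weight_nonneg h0 h1 G
    have hnn : ∀ i, 0 ≤ weight n p G *
        Real.exp (γ / 4 * (pairCount G (S i) - (p * (S i).card + γ * p * n ^ 2))) :=
      fun i => mul_nonneg hw (Real.exp_pos _).le
    by_cases hG : Q G
    · rw [if_pos hG]
      have := Finset.sum_nonneg (s := Finset.univ) (fun i _ => hnn i)
      linarith
    · rw [if_neg hG, zero_add]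
      have : ∃ i, p * (S i).card + γ * p * n ^ 2 < (pairCount G (S i) : ℝ) := by
        by_contra hcon
        push Not at hcon
        exact hG (hQ G hcon)
      obtain ⟨i, hi⟩ := this
      refine le_trans ?_ (Finset.single_le_sum (fun i _ => hnn i) (Finset.mem_univ i))
      have h5 : 1 ≤ Real.exp (γ / 4 * (pairCount G (S i) - (p * (S i).card + γ * p * n ^ 2))) :=
        Real.one_le_exp (mul_nonneg (by positivity) (by linarith))
      nlinarith
  rw [sum_weight] at hle
  linarith

end Probability

/-! ### The family of pair sets -/

section Family

open Classical

/-- The data describing a candidate set of ordered pairs: a partition of the vertices into `k`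
blocks, one set of candidates for each block type, the type of each block for each vertex, and
the set of first coordinates. -/
abbrev Data (n k : ℕ) : Type :=
  (Fin n → Fin k) × (Fin 3 → Finset (Fin n)) × (Fin n → Fin k → Fin 3) × Finset (Fin n)

/-- The set of ordered pairs `(a, b)` described by `d : Data n k`. -/
noncomputable def pairs {n k : ℕ} (d : Data n k) : Finset (Fin n × Fin n) :=
  Finset.univ.filter (fun q => q.1 ∈ d.2.2.2 ∧ q.2 ∈ d.2.1 (d.2.2.1 q.1 (d.1 q.2)))

lemma card_data_le (n k : ℕ) (hk : 1 ≤ k) :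
    (Fintype.card (Data n k) : ℝ) ≤ Real.exp (6 * n * k) := by
  have h1 : Fintype.card (Data n k) = (k * (16 * 3 ^ k)) ^ n := by
    simp only [Data, Fintype.card_prod, Fintype.card_pi, Fintype.card_fin, Fintype.card_finset,
      Finset.prod_const, Finset.card_univ]
    have h16 : (16 : ℕ) ^ n = (2 ^ n) ^ 4 := by
      rw [← pow_mul, mul_comm, pow_mul]; norm_num
    rw [mul_pow, mul_pow, h16]
    ring
  have hk' : (1 : ℝ) ≤ k := by exact_mod_cast hk
  have hk1 : (k : ℝ) ≤ Real.exp k := by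
    have := Real.add_one_le_exp (k : ℝ); linarith
  have he := Real.exp_one_gt_d9
  have hk2 : (16 : ℝ) ≤ Real.exp (3 * k) := by
    calc (16 : ℝ) ≤ (Real.exp 1) ^ 3 := by
          have : (2.7 : ℝ) ^ 3 ≤ (Real.exp 1) ^ 3 := by gcongr; linarith
          norm_num at this ⊢; linarith
      _ = Real.exp 3 := by rw [← Real.exp_nat_mul]; norm_num
      _ ≤ _ := Real.exp_le_exp.2 (by linarith)
  have hk3 : (3 : ℝ) ^ k ≤ Real.exp (2 * k) := by
    have : (3 : ℝ) ≤ Real.exp 2 := by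
      have := Real.add_one_le_exp (2 : ℝ); linarith
    calc (3 : ℝ) ^ k ≤ (Real.exp 2) ^ k := by gcongr
      _ = _ := by rw [← Real.exp_nat_mul]; ring_nf
  rw [h1]
  push_cast
  calc ((k : ℝ) * (16 * 3 ^ k)) ^ n
      ≤ (Real.exp k * (Real.exp (3 * k) * Real.exp (2 * k))) ^ n := by gcongr
    _ = _ := by
      rw [← Real.exp_add, ← Real.exp_add, ← Real.exp_nat_mul]
      congr 1; ring

lemma deg_eq_card {n : ℕ} (G : SimpleGraph (Fin n)) (v : Fin n) :
    deg G v = (Finset.univ.filter (fun b => G.Adj v b)).card := by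
  rw [deg, ← Set.ncard_coe_finset]
  congr 1
  ext b
  simp

/-- On a longest path, every neighbour of the endpoint of a rotated path lies on the path. -/
lemma mem_of_longest {H : SimpleGraph V} {P l : List V} (hP : IsLongestPathOn H P)
    (hl : l.Perm P) (hc : l.IsChain H.Adj) {a b : V} (ha : l.head? = some a) (hab : H.Adj a b) :
    b ∈ l := by
  by_contra hb
  have hpath : IsPathOn H (b :: l) := by
    refine ⟨by simp, List.nodup_cons.2 ⟨hb, hl.nodup_iff.2 hP.1.2.1⟩, ?_⟩
    refine List.isChain_cons.2 ⟨?_, hc⟩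
    intro y hy
    rw [ha, Option.mem_some_iff] at hy
    exact hy ▸ hab.symm
  have := hP.2 _ hpath
  rw [List.length_cons, hl.length_eq] at this
  omega

/-- The combinatorial core: all `G'`-edges leaving `A` are covered by a set of pairs from the
family, whose size exceeds `|A| |R(A)|` only by the contribution of the broken blocks. -/
lemma exists_data {n k T : ℕ} (hk : 0 < k) {G G' : SimpleGraph (Fin n)} (hG : G' ≤ G)
    {P' P : List (Fin n)} (hP : IsLongestPathOn (G' ⊔ listGraph P') P)
    (A W : Finset (Fin n)) (Pa : Fin n → List (Fin n))
    (hPa : ∀ a ∈ A, (Pa a).head? = some a ∧ Pa a ∈ rotSet G' P T)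
    (hAW : A ⊆ W)
    (hW : ∀ a ∈ A, ∀ l' x, IsRotation G' P (Pa a) l' → l'.head? = some x → x ∈ W) :
    ∃ d : Data n k, A.card * minDeg G' (A : Set (Fin n)) ≤ pairCount G (pairs d) ∧
      (pairs d).card ≤ A.card * (W.card + 2 * (n / k + 1) * (2 * T + 2)) := by
  set m := n / k + 1 with hm
  have hm0 : 0 < m := Nat.succ_pos _
  have hPn := hP.1.2.1
  have hspec : ∀ a, ∃ D : Finset (Fin n), ∃ o, a ∈ A →
      (Pa a).Perm P ∧ (Pa a).IsChain (G' ⊔ listGraph P').Adj ∧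
      D.card ≤ 2 * T + 2 ∧ Oriented P (Pa a) D o := by
    intro a
    by_cases ha : a ∈ A
    · obtain ⟨h1, h2, D, o, h3, h4⟩ := rotSet_spec le_sup_left hP.1 T (Pa a) (hPa a ha).2
      refine ⟨D, o, fun _ => ⟨h1, h2, h3, ?_⟩⟩
      convert h4
    · exact ⟨∅, fun _ => true, fun h => absurd h ha⟩
  choose D o hDo using hspec
  have hblock : ∀ b ∈ P, block P m b < k := by
    intro b hb
    have h1 : P.idxOf b < P.length := List.idxOf_lt_length_iff.2 hb
    have h2 : P.length ≤ n := by simpa using hPn.length_le_card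
    rw [block, Nat.div_lt_iff_lt_mul hm0]
    have h3 := Nat.div_add_mod n k
    have h4 := Nat.mod_lt n hk
    rw [hm]
    nlinarith
  set β : Fin n → Fin k := fun b => if h : block P m b < k then ⟨block P m b, h⟩ else ⟨0, hk⟩
  have hβ : ∀ b ∈ P, (β b : ℕ) = block P m b := by
    intro b hb
    simp only [β, hblock b hb, dif_pos]
  have hcandP : ∀ i b, b ∈ cand P W i → b ∈ P := by
    intro i b hb
    unfold cand at hb
    split_ifs at hb <;> simp only [Finset.mem_filter, Finset.mem_univ, true_and] at hb
    · obtain ⟨x, -, hx⟩ := hb; exact hx.mem_right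
    · obtain ⟨x, -, hx⟩ := hb; exact hx.mem_left
    · exact hb
  set d : Data n k := (β, cand P W, fun a j => blockType P m (D a) (o a) j, A) with hd
  have hcount : ∀ f : Fin n × Fin n → Prop,
      ((pairs d).filter f).card = ∑ a ∈ A, (Finset.univ.filter (fun b =>
        b ∈ cand P W (blockType P m (D a) (o a) (β b)) ∧ f (a, b))).card := by
    intro f
    rw [Finset.card_eq_sum_card_fiberwise (f := Prod.fst) (t := A)]
    · refine Finset.sum_congr rfl fun a ha => ?_
      refine Finset.card_bij' (fun q _ => q.2) (fun b _ => (a, b)) ?_ ?_ ?_ ?_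
      · rintro ⟨a', b⟩ hq
        simp only [pairs, hd, Finset.mem_filter, Finset.mem_univ, true_and] at hq ⊢
        obtain ⟨⟨⟨-, h1⟩, h2⟩, rfl⟩ := hq
        exact ⟨h1, h2⟩
      · intro b hb
        simp only [pairs, hd, Finset.mem_filter, Finset.mem_univ, true_and, and_true] at hb ⊢
        exact ⟨⟨ha, hb.1⟩, hb.2⟩
      · rintro ⟨a', b⟩ hq
        simp only [Finset.mem_filter] at hq
        simp [hq.2]
      · intro b hb; rfl
    · rintro ⟨a', b⟩ hq
      simp only [pairs, hd, Finset.coe_filter, Finset.mem_filter, Finset.mem_univ, true_and,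
        Set.mem_ofPred_eq] at hq
      exact hq.1.1
  refine ⟨d, ?_, ?_⟩
  · rw [pairCount, hcount, ← smul_eq_mul]
    refine Finset.card_nsmul_le_sum _ _ _ fun a ha => ?_
    have h1 : minDeg G' (A : Set (Fin n)) ≤ deg G' a :=
      Nat.sInf_le ⟨a, ha, rfl⟩
    refine h1.trans ?_
    rw [deg_eq_card]
    refine Finset.card_le_card ?_
    intro b hb
    simp only [Finset.mem_filter, Finset.mem_univ, true_and] at hb ⊢
    obtain ⟨h2, h3, -, h5⟩ := hDo a ha
    have hadj : (G' ⊔ listGraph P').Adj a b := Or.inl hb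
    have hbl := mem_of_longest hP h2 h3 (hPa a ha).1 hadj
    have hbP := h2.mem_iff.1 hbl
    refine ⟨?_, hG hb⟩
    rw [hβ b hbP]
    convert mem_cand hPn (m := m) h5 hbP ?_
    intro c hc hcb
    -- If `c` is the endpoint `a` itself then `c ∈ A`; otherwise `c` is the new endpoint of the
    -- rotation with pivot `b`.
    obtain ⟨s, t, hst⟩ := hc
    have hhead := (hPa a ha).1
    cases s with
    | nil =>
      rw [hst] at hhead
      simp at hhead
      exact hAW (hhead ▸ ha)
    | cons z s =>
      have hz : z = a := by
        rw [hst] at hhead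
        simpa using hhead
      subst hz
      exact hW z ha _ c ⟨z, c, b, s, t, hst, hb, hcb, rfl⟩ (by simp)
  · have h0 := hcount (fun _ => True)
    simp only [Finset.filter_true, and_true] at h0
    rw [h0, ← smul_eq_mul]
    refine Finset.sum_le_card_nsmul _ _ _ fun a ha => ?_
    obtain ⟨h2, -, h4, h5⟩ := hDo a ha
    have h6 := card_cand_le hPn (h2.nodup_iff.2 hPn) h5 (m := m) hm0 W
    have h7 : Finset.univ.filter (fun b => b ∈ cand P W (blockType P m (D a) (o a) (β b))) ⊆
        Finset.univ.filter
          (fun b => b ∈ cand P W (blockType P m (D a) (o a) (block P m b))) := by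
      intro b hb
      simp only [Finset.mem_filter, Finset.mem_univ, true_and] at hb ⊢
      rwa [hβ b (hcandP _ _ hb)] at hb
    have h8 := Finset.card_le_card h7
    have h9 : 2 * m * (D a).card ≤ 2 * m * (2 * T + 2) := Nat.mul_le_mul_left _ h4
    calc _ ≤ _ := h8
      _ ≤ W.card + 2 * m * (D a).card := by convert h6
      _ ≤ _ := by omega

end Family

lemma rotSet_mono (G : SimpleGraph V) (P : List V) {s t : ℕ} (h : s ≤ t) :
    rotSet G P s ⊆ rotSet G P t := by
  induction t, h using Nat.le_induction with
  | base => exact subset_rfl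
  | succ t _ ih => exact ih.trans Set.subset_union_left

/-- Lemma 4.2.  For every `0 < ε < 1` there exist `η > 0` and `C > 0`
such that, for `p ≥ C log n / n`, a.a.s. the following holds: for every subgraph
`G' ⊆ G`, every path `P'` on `V`, every longest path `P` in `G' ∪ P'`, every set
`A ⊆ R^{η log n}_{G',P,v_ℓ}` with `|A| ≥ εn/100`, and every fixed choice `Pa` of
minimal-rotation paths `P_a` for `a ∈ A`, we have
`|R_{G',P,v_ℓ}(A)| ≥ p⁻¹ δ_{G'}(A) − εn/10`. -/
theorem rotation_expansion (ε : ℝ) (hε : 0 < ε) (hε1 : ε < 1) :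
    ∃ η : ℝ, 0 < η ∧ ∃ C : ℝ, 0 < C ∧ ∀ θ : ℝ, 0 < θ → ∃ N : ℕ, ∀ n : ℕ, N ≤ n →
      ∀ p : ℝ, C * Real.log n / n ≤ p → p ≤ 1 →
        1 - θ ≤ Pr n p (fun G =>
          ∀ G' : SimpleGraph (Fin n), G' ≤ G →
            ∀ P' P : List (Fin n), P'.Nodup →
              IsLongestPathOn (G' ⊔ listGraph P') P →
              ∀ A : Set (Fin n), A ⊆ Rset G' P ⌈η * Real.log n⌉₊ →
                ε * n / 100 ≤ (A.ncard : ℝ) →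
                ∀ Pa : Fin n → List (Fin n),
                  (∀ a ∈ A, (Pa a).head? = some a ∧
                    ∃ t : ℕ, Pa a ∈ rotSet G' P t ∧ ∀ s : ℕ, a ∈ Rset G' P s → t ≤ s) →
                  p⁻¹ * (minDeg G' A : ℝ) - ε * n / 10 ≤
                    (((A ∪ {x | ∃ a ∈ A, ∃ l' : List (Fin n),
                        IsRotation G' P (Pa a) l' ∧ l'.head? = some x}).ncard : ℝ))) := by
  -- `η = 1` suffices; `K` makes the broken blocks negligible, `γ` is the relative error allowed in
  -- the edge counts, and `C` beats the `exp (O(K n log n))` members of the family.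
  obtain ⟨K, hK⟩ := exists_nat_ge (240 / ε)
  have hK0 : (0 : ℝ) < K := lt_of_lt_of_le (by positivity) hK
  have hK1 : 1 ≤ K := by exact_mod_cast hK0
  set γ : ℝ := ε ^ 2 / 3000 with hγ
  have hγ0 : 0 < γ := by positivity
  have hγ1 : γ ≤ 1 := by rw [hγ]; nlinarith
  set C : ℝ := 8 * (12 * K + 1) / γ ^ 2 with hC
  have hC0 : 0 < C := by positivity
  refine ⟨1, one_pos, C, hC0, fun θ hθ => ?_⟩
  have ev : ∀ᶠ n : ℕ in atTop, 3 ≤ n ∧ 16 * Real.log n ≤ ε * n / 30 ∧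
      Real.exp (-(n : ℝ)) ≤ θ := by
    refine (eventually_ge_atTop 3).and (Eventually.and ?_ ?_)
    · have h1 := (Real.isLittleO_log_id_atTop.comp_tendsto
        (tendsto_natCast_atTop_atTop (R := ℝ))).bound (c := ε / 480) (by positivity)
      filter_upwards [h1] with n hn
      simp only [Function.comp, id, Real.norm_eq_abs, Nat.abs_cast] at hn
      have := le_abs_self (Real.log n)
      linarith
    · have h2 := Real.tendsto_exp_neg_atTop_nhds_zero.comp
        (tendsto_natCast_atTop_atTop (R := ℝ))
      exact h2.eventually_le_const hθ
  obtain ⟨N, hN⟩ := eventually_atTop.1 ev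
  refine ⟨N, fun n hn p hp hp1 => ?_⟩
  obtain ⟨hn3, hlog, hexp⟩ := hN n hn
  have hn0 : (0 : ℝ) < n := by positivity
  have hlog1 : 1 ≤ Real.log n := by
    rw [Real.le_log_iff_exp_le hn0]
    have := Real.exp_one_lt_d9
    have : (3 : ℝ) ≤ n := by exact_mod_cast hn3
    linarith
  have hp0 : 0 < p := lt_of_lt_of_le (by positivity) hp
  simp only [one_mul]
  set T := ⌈Real.log n⌉₊ with hT
  have hT1 : 1 ≤ T := Nat.one_le_ceil_iff.2 (by linarith)
  have hT2 : (T : ℝ) ≤ 2 * Real.log n := by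
    have := Nat.ceil_lt_add_one (show 0 ≤ Real.log n by linarith)
    linarith
  have hk : 1 ≤ K * T := Nat.mul_pos hK1 hT1
  refine le_trans ?_ (Pr_ge_of_family (I := Data n (K * T)) hp0.le hp1 hγ0 hγ1 pairs _ ?_)
  · -- the union bound
    have h1 := card_data_le n (K * T) hk
    have h2 : (Fintype.card (Data n (K * T)) : ℝ) * Real.exp (-(γ ^ 2 * p * n ^ 2 / 8)) ≤ θ := by
      refine le_trans ?_ hexp
      refine (mul_le_mul_of_nonneg_right h1 (Real.exp_pos _).le).trans ?_
      rw [← Real.exp_add, Real.exp_le_exp]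
      push_cast
      have h3 : 6 * n * ((K : ℝ) * T) ≤ 12 * K * (n * Real.log n) := by
        have : 6 * n * (K : ℝ) * T ≤ 6 * n * K * (2 * Real.log n) := by gcongr
        linarith
      have h4 : (12 * (K : ℝ) + 1) * (n * Real.log n) ≤ γ ^ 2 * p * n ^ 2 / 8 := by
        have h5 : C * Real.log n ≤ p * n := (div_le_iff₀ hn0).1 hp
        have h6 : γ ^ 2 * C = 8 * (12 * K + 1) := by rw [hC]; field_simp
        have h7 : γ ^ 2 * n / 8 * (C * Real.log n) ≤ γ ^ 2 * n / 8 * (p * n) := by gcongr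
        calc _ = (γ ^ 2 * C) * (n * Real.log n) / 8 := by rw [h6]; ring
          _ = γ ^ 2 * n / 8 * (C * Real.log n) := by ring
          _ ≤ _ := h7
          _ = _ := by ring
      have h8 : (n : ℝ) * 1 ≤ n * Real.log n := by gcongr
      linarith
    linarith
  · intro G hG G' hG' P' P _ hP A hA hAcard Pa hPa
    classical
    set W : Set (Fin n) := A ∪ {x | ∃ a ∈ A, ∃ l' : List (Fin n),
      IsRotation G' P (Pa a) l' ∧ l'.head? = some x} with hW
    obtain ⟨d, hd1, hd2⟩ := exists_data (k := K * T) (T := T) hk hG' hP A.toFinset W.toFinset Pa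
      (by
        intro a ha
        have ha' : a ∈ A := by simpa using ha
        obtain ⟨h1, t, h2, h3⟩ := hPa a ha'
        exact ⟨h1, rotSet_mono _ _ (h3 T (hA ha')) h2⟩)
      (by
        intro a ha
        have ha' : a ∈ A := by simpa using ha
        simp only [Set.mem_toFinset]
        exact Or.inl ha')
      (by
        intro a ha l' x h1 h2
        have ha' : a ∈ A := by simpa using ha
        simp only [Set.mem_toFinset]
        exact Or.inr ⟨a, ha', l', h1, h2⟩)
    have hGd := hG d
    rw [Set.coe_toFinset, ← Set.ncard_eq_toFinset_card'] at hd1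
    rw [← Set.ncard_eq_toFinset_card', ← Set.ncard_eq_toFinset_card'] at hd2
    have hd1' : (A.ncard : ℝ) * minDeg G' A ≤ pairCount G (pairs d) := by exact_mod_cast hd1
    have hd2' : ((pairs d).card : ℝ) ≤
        A.ncard * (W.ncard + 2 * ((n / (K * T) : ℕ) + 1) * (2 * T + 2)) := by exact_mod_cast hd2
    have hA0 : (0 : ℝ) < A.ncard := lt_of_lt_of_le (by positivity) hAcard
    have hT0 : (1 : ℝ) ≤ T := by exact_mod_cast hT1
    -- the contribution of the broken blocks
    have hbr : 2 * (((n / (K * T) : ℕ) : ℝ) + 1) * (2 * T + 2) ≤ ε * n / 15 := by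
      have h1 : ((n / (K * T) : ℕ) : ℝ) ≤ n / (K * T) := by
        have := Nat.cast_div_le (α := ℝ) (m := n) (n := K * T)
        push_cast at this
        exact this
      have h2 : 2 * (((n / (K * T) : ℕ) : ℝ) + 1) * (2 * T + 2) ≤
          2 * ((n : ℝ) / (K * T) + 1) * (4 * T) := by gcongr; linarith
      have h3 : 2 * ((n : ℝ) / (K * T) + 1) * (4 * T) = 8 * n / K + 8 * T := by
        field_simp; ring
      have h4 : 8 * (n : ℝ) / K ≤ ε * n / 30 := by
        rw [div_le_iff₀ hK0]
        have : 240 ≤ K * ε := (div_le_iff₀ hε).1 hK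
        nlinarith
      linarith
    -- the error term of the edge count
    have herr : γ * (n : ℝ) ^ 2 ≤ ε * n / 30 * A.ncard := by
      have : ε * n / 30 * (ε * n / 100) ≤ ε * n / 30 * A.ncard := by gcongr
      calc γ * (n : ℝ) ^ 2 = ε * n / 30 * (ε * n / 100) := by rw [hγ]; ring
        _ ≤ _ := this
    have hfin : (A.ncard : ℝ) * minDeg G' A ≤ A.ncard * (p * (W.ncard + ε * n / 10)) := by
      have h1 : p * ((pairs d).card : ℝ) ≤ p * (A.ncard * (W.ncard + ε * n / 15)) := by
        refine mul_le_mul_of_nonneg_left (hd2'.trans ?_) hp0.le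
        gcongr
      have h2 := mul_le_mul_of_nonneg_left herr hp0.le
      calc _ ≤ _ := hd1'
        _ ≤ _ := hGd
        _ ≤ p * (A.ncard * (W.ncard + ε * n / 15)) + p * (ε * n / 30 * A.ncard) := by linarith
        _ = _ := by ring
    have hfin' := le_of_mul_le_mul_left hfin hA0
    have : p⁻¹ * (minDeg G' A : ℝ) ≤ W.ncard + ε * n / 10 := by
      rw [inv_mul_le_iff₀ hp0]
      exact hfin'
    linarith

end Resilience
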